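/- Let m, n be integers and q a prime power with n + q → ∞, m constant, and 2m < n. Let t → ∞ be any function of the instance. Let 𝓕 be the family of all m-flats in F_q^n, and set ℓ = q^m (the number of points in an m-flat). Let X be the random subset of F_q^n in which each point is included independently with probability θ, and let Γ be the event that some m-flat is entirely contained in X. Then: (1) if θ < (|𝓕|·t)^{−1/ℓ}, then Pr[Γ] → 0; and (2) if θ > (|𝓕|·t^{−1})^{−1/ℓ}, then Pr[Γ] → 1. -/

import Mathlib

open Filter Asymptotics

noncomputable def prRandomSubset {α : Type*} (U : Finset α) (θ : ℝ)
    (E : Finset α → Prop) : ℝ :=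
  ∑ A ∈ U.powerset,
    @ite ℝ (E A) (Classical.propDecidable _)
      (θ ^ A.card * (1 - θ) ^ (U.card - A.card)) 0

def IsFlat (K : Type*) {V : Type*} [Field K] [AddCommGroup V] [Module K V]
    (m : ℕ) (S : Set V) : Prop :=
  ∃ W : Submodule K V, Module.finrank K W = m ∧ ∃ v : V, S = (v + ·) '' (W : Set V)

section RandomSubset

variable {α : Type*}

lemma prRandomSubset_nonneg (U : Finset α) {θ : ℝ} (h0 : 0 ≤ θ) (h1 : θ ≤ 1)
    (E : Finset α → Prop) : 0 ≤ prRandomSubset U θ E := by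
  refine Finset.sum_nonneg fun A _ => ?_
  have : 0 ≤ 1 - θ := by linarith
  split_ifs <;> positivity

variable [Fintype α]

lemma prRandomSubset_add_not (θ : ℝ) (E : Finset α → Prop) :
    prRandomSubset Finset.univ θ E + prRandomSubset Finset.univ θ (fun A => ¬ E A) = 1 := by
  unfold prRandomSubset
  rw [← Finset.sum_add_distrib]
  have h := Finset.sum_pow_mul_eq_add_pow θ (1 - θ) (Finset.univ : Finset α)
  rw [add_sub_cancel, one_pow] at h
  refine Eq.trans (Finset.sum_congr rfl fun A _ => ?_) h
  by_cases hE : E A <;> simp [hE]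

open Classical in
lemma prRandomSubset_superset (θ : ℝ) (S : Finset α) :
    prRandomSubset Finset.univ θ (fun A => S ⊆ A) = θ ^ S.card := by
  have h := Finset.prod_add (fun _ : α => θ) (fun x => if x ∈ S then 0 else 1 - θ) Finset.univ
  have hl : ∀ x : α, θ + (if x ∈ S then 0 else 1 - θ) = if x ∈ S then θ else 1 := by
    intro x
    split_ifs <;> ring
  simp only [hl, Finset.prod_ite_mem, Finset.univ_inter, Finset.prod_const] at h
  rw [h]
  refine Finset.sum_congr rfl fun A _ => ?_
  split_ifs with hSA
  · congr 1
    rw [Finset.prod_congr rfl (g := fun _ => 1 - θ), Finset.prod_const,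
      Finset.card_sdiff_of_subset (Finset.subset_univ A)]
    intro x hx
    rw [if_neg fun hS => (Finset.mem_sdiff.1 hx).2 (hSA hS)]
  · obtain ⟨x, hxS, hxA⟩ := Finset.not_subset.1 hSA
    rw [Finset.prod_eq_zero (i := x) (by simp [hxA]) (by simp [hxS]), mul_zero]

/-- The first moment bound. -/
lemma prRandomSubset_exists_subset_le {θ : ℝ} (h0 : 0 ≤ θ) (h1 : θ ≤ 1)
    (𝓢 : Finset (Finset α)) {ℓ : ℕ} (hℓ : ∀ S ∈ 𝓢, S.card = ℓ) :
    prRandomSubset Finset.univ θ (fun A => ∃ S ∈ 𝓢, S ⊆ A) ≤ 𝓢.card * θ ^ ℓ := by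
  classical
  have h : ∑ S ∈ 𝓢, prRandomSubset Finset.univ θ (fun A => S ⊆ A) = 𝓢.card * θ ^ ℓ := by
    rw [Finset.sum_congr rfl fun S hS => by rw [prRandomSubset_superset, hℓ S hS],
      Finset.sum_const, nsmul_eq_mul]
  rw [← h]
  unfold prRandomSubset
  rw [Finset.sum_comm]
  refine Finset.sum_le_sum fun A _ => ?_
  have h' : 0 ≤ 1 - θ := by linarith
  split_ifs with hE
  · obtain ⟨S, hS, hSA⟩ := hE
    refine le_trans ?_ (Finset.single_le_sum
      (fun T _ => by split_ifs <;> positivity) hS)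
    simp [hSA]
  · exact Finset.sum_nonneg fun T _ => by split_ifs <;> positivity

/-- The second moment bound. -/
lemma prRandomSubset_not_exists_subset_le [DecidableEq α] {θ : ℝ} (h0 : 0 < θ) (h1 : θ ≤ 1)
    (𝓢 : Finset (Finset α)) {ℓ : ℕ} (hℓ : ∀ S ∈ 𝓢, S.card = ℓ) :
    prRandomSubset Finset.univ θ (fun A => ¬ ∃ S ∈ 𝓢, S ⊆ A) * (𝓢.card : ℝ) ^ 2 ≤
      ∑ S ∈ 𝓢, ∑ T ∈ 𝓢 with (S ∩ T).Nonempty, (θ ^ (S ∩ T).card)⁻¹ := by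
  classical
  set w : Finset α → ℝ := fun A =>
    θ ^ A.card * (1 - θ) ^ ((Finset.univ : Finset α).card - A.card) with hw
  have hw0 : ∀ A, 0 ≤ w A := by
    intro A
    have h' : 0 ≤ 1 - θ := by linarith
    positivity
  have hsup : ∀ S : Finset α, ∑ A : Finset α, w A * (if S ⊆ A then 1 else 0) = θ ^ S.card := by
    intro S
    rw [← prRandomSubset_superset θ S, prRandomSubset, Finset.powerset_univ]
    refine Finset.sum_congr rfl fun A _ => ?_
    by_cases h : S ⊆ A <;> simp [h, hw]
  have hone : ∑ A : Finset α, w A = 1 := by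
    simpa using hsup ∅
  set Y : Finset α → ℝ := fun A => ∑ S ∈ 𝓢, if S ⊆ A then 1 else 0 with hY
  set μ : ℝ := 𝓢.card * θ ^ ℓ with hμ
  have hEY : ∑ A : Finset α, w A * Y A = μ := by
    simp_rw [hY, Finset.mul_sum]
    rw [Finset.sum_comm]
    rw [Finset.sum_congr rfl fun S hS => by rw [hsup, hℓ S hS], Finset.sum_const, nsmul_eq_mul]
  have hEY2 : ∑ A : Finset α, w A * Y A ^ 2 = ∑ S ∈ 𝓢, ∑ T ∈ 𝓢, θ ^ (S ∪ T).card := by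
    have h : ∀ A, w A * Y A ^ 2 =
        ∑ S ∈ 𝓢, ∑ T ∈ 𝓢, w A * (if S ∪ T ⊆ A then 1 else 0) := by
      intro A
      rw [hY, sq, Finset.sum_mul_sum, Finset.mul_sum]
      refine Finset.sum_congr rfl fun S _ => ?_
      rw [Finset.mul_sum]
      refine Finset.sum_congr rfl fun T _ => ?_
      by_cases hS : S ⊆ A <;> by_cases hT : T ⊆ A <;> simp [hS, hT, Finset.union_subset_iff]
    rw [Finset.sum_congr rfl fun A _ => h A, Finset.sum_comm]
    refine Finset.sum_congr rfl fun S _ => ?_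
    rw [Finset.sum_comm]
    exact Finset.sum_congr rfl fun T _ => hsup _
  have hvar : prRandomSubset Finset.univ θ (fun A => ¬ ∃ S ∈ 𝓢, S ⊆ A) * μ ^ 2 ≤
      ∑ A : Finset α, w A * Y A ^ 2 - μ ^ 2 := by
    have hexp : ∑ A : Finset α, w A * (Y A - μ) ^ 2 =
        ∑ A : Finset α, w A * Y A ^ 2 - μ ^ 2 := by
      have : ∀ A, w A * (Y A - μ) ^ 2 = w A * Y A ^ 2 - 2 * μ * (w A * Y A) + μ ^ 2 * w A := by
        intro A
        ring
      rw [Finset.sum_congr rfl fun A _ => this A, Finset.sum_add_distrib,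
        Finset.sum_sub_distrib, ← Finset.mul_sum, ← Finset.mul_sum, hEY, hone]
      ring
    rw [← hexp, prRandomSubset, Finset.powerset_univ, Finset.sum_mul]
    refine Finset.sum_le_sum fun A _ => ?_
    split_ifs with hE
    · rw [zero_mul]
      have := hw0 A
      positivity
    · have : Y A = 0 := Finset.sum_eq_zero fun S hS => if_neg fun h => hE ⟨S, hS, h⟩
      rw [this, zero_sub, neg_sq]
  have hsplit : ∑ S ∈ 𝓢, ∑ T ∈ 𝓢, θ ^ (S ∪ T).card - μ ^ 2 ≤
      (θ ^ ℓ) ^ 2 * ∑ S ∈ 𝓢, ∑ T ∈ 𝓢 with (S ∩ T).Nonempty, (θ ^ (S ∩ T).card)⁻¹ := by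
    have hμ2 : μ ^ 2 = ∑ S ∈ 𝓢, ∑ T ∈ 𝓢, (θ ^ ℓ) ^ 2 := by
      simp only [Finset.sum_const, nsmul_eq_mul, hμ]
      ring
    rw [hμ2, ← Finset.sum_sub_distrib, Finset.mul_sum]
    refine Finset.sum_le_sum fun S hS => ?_
    rw [← Finset.sum_sub_distrib, Finset.mul_sum, Finset.sum_filter]
    refine Finset.sum_le_sum fun T hT => ?_
    have hc : (S ∪ T).card + (S ∩ T).card = ℓ + ℓ := by
      rw [Finset.card_union_add_card_inter, hℓ S hS, hℓ T hT]
    have hp : θ ^ (S ∪ T).card = (θ ^ ℓ) ^ 2 * (θ ^ (S ∩ T).card)⁻¹ := by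
      rw [eq_mul_inv_iff_mul_eq₀ (by positivity), ← pow_add, hc]
      ring
    split_ifs with hne
    · rw [hp]
      have : 0 ≤ (θ ^ ℓ) ^ 2 := by positivity
      linarith
    · rw [hp, Finset.not_nonempty_iff_eq_empty.1 hne]
      simp
  rw [hEY2] at hvar
  have hfin := hvar.trans hsplit
  rw [hμ, mul_pow, ← mul_assoc, mul_comm] at hfin
  exact le_of_mul_le_mul_left hfin (by positivity)

end RandomSubset

section Counting

variable {K V : Type*} [Field K] [Fintype K] [AddCommGroup V] [Module K V] [Fintype V]

open Module

open Classical in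
/-- An upper bound for the number of subspaces of given dimension containing a given subspace. -/
lemma card_submodule_ge_mul_le [Fintype (Submodule K V)] (j k : ℕ) (U : Submodule K V)
    (hU : finrank K U = k) :
    (Finset.univ.filter fun W : Submodule K V => U ≤ W ∧ finrank K W = k + j).card *
      Fintype.card K ^ ((k + j) * j) ≤ (2 * Fintype.card V) ^ j := by
  induction j generalizing k U with
  | zero =>
    simp only [add_zero, mul_zero, pow_zero, mul_one]
    refine Finset.card_le_one.2 ?_
    have h : ∀ W : Submodule K V, U ≤ W → finrank K W = k → U = W := fun W h1 h2 =>
      Submodule.eq_of_le_of_finrank_eq h1 (hU.trans h2.symm)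
    intro W hW W' hW'
    simp only [Finset.mem_filter, Finset.mem_univ, true_and] at hW hW'
    rw [← h W hW.1 hW.2, h W' hW'.1 hW'.2]
  | succ j ih =>
    set q := Fintype.card K with hq
    have hq2 : 2 ≤ q := Fintype.one_lt_card
    set 𝓦 := Finset.univ.filter fun W : Submodule K V => U ≤ W ∧ finrank K W = k + (j + 1)
      with h𝓦
    have hdc := Finset.sum_card_bipartiteAbove_eq_sum_card_bipartiteBelow
      (fun (W : Submodule K V) (x : V) => x ∈ W) (s := 𝓦)
      (t := Finset.univ.filter fun x : V => x ∉ U)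
    have hl : ∀ W ∈ 𝓦, q ^ (k + (j + 1)) ≤ 2 * (Finset.bipartiteAbove
        (fun (W : Submodule K V) (x : V) => x ∈ W)
        (Finset.univ.filter fun x : V => x ∉ U) W).card := by
      intro W hW
      simp only [h𝓦, Finset.mem_filter, Finset.mem_univ, true_and] at hW
      have hWc : (Finset.univ.filter fun x : V => x ∈ W).card = q ^ (k + (j + 1)) := by
        rw [← hW.2, hq, ← Module.card_eq_pow_finrank (K := K) (V := W), Fintype.card_subtype]
      have hUc : (Finset.univ.filter fun x : V => x ∈ U).card = q ^ k := by
        rw [← hU, hq, ← Module.card_eq_pow_finrank (K := K) (V := U), Fintype.card_subtype]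
      have hsub : (Finset.univ.filter fun x : V => x ∈ W) ⊆
          (Finset.univ.filter fun x : V => x ∈ U) ∪ Finset.bipartiteAbove
            (fun (W : Submodule K V) (x : V) => x ∈ W)
            (Finset.univ.filter fun x : V => x ∉ U) W := by
        intro x hx
        simp only [Finset.mem_filter, Finset.mem_univ, true_and, Finset.mem_union,
          Finset.bipartiteAbove] at hx ⊢
        tauto
      have h1 := (Finset.card_le_card hsub).trans (Finset.card_union_le _ _)
      rw [hWc, hUc] at h1
      have h2 : 2 * q ^ k ≤ q ^ (k + (j + 1)) := by
        rw [← add_assoc, pow_succ, mul_comm]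
        exact Nat.mul_le_mul (Nat.pow_le_pow_right (by lia) (by lia)) hq2
      lia
    have hr : ∀ x ∈ Finset.univ.filter fun x : V => x ∉ U,
        (Finset.bipartiteBelow (fun (W : Submodule K V) (x : V) => x ∈ W) 𝓦 x).card *
          q ^ ((k + 1 + j) * j) ≤ (2 * Fintype.card V) ^ j := by
      intro x hx
      simp only [Finset.mem_filter, Finset.mem_univ, true_and] at hx
      have hx0 : x ≠ 0 := fun h => hx (h ▸ U.zero_mem)
      have hfr : finrank K (U ⊔ Submodule.span K {x} : Submodule K V) = k + 1 := by
        have h := Submodule.finrank_sup_add_finrank_inf_eq U (Submodule.span K {x})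
        rw [((Submodule.disjoint_span_singleton' hx0).2 hx).eq_bot, finrank_bot,
          finrank_span_singleton hx0, hU] at h
        exact h
      refine le_trans (Nat.mul_le_mul_right _ (Finset.card_le_card ?_)) (ih (k + 1) _ hfr)
      intro W hW
      simp only [Finset.bipartiteBelow, h𝓦, Finset.mem_filter, Finset.mem_univ, true_and] at hW ⊢
      exact ⟨sup_le hW.1.1 (by simpa using hW.2), by lia⟩
    have hl' := Finset.card_nsmul_le_sum 𝓦 _ _ hl
    rw [← Finset.mul_sum, hdc, smul_eq_mul] at hl'
    have hr' := Finset.sum_le_sum hr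
    rw [← Finset.sum_mul, Finset.sum_const, smul_eq_mul] at hr'
    have hc : (Finset.univ.filter fun x : V => x ∉ U).card ≤ Fintype.card V :=
      Finset.card_le_univ _
    calc 𝓦.card * q ^ ((k + (j + 1)) * (j + 1))
        = 𝓦.card * q ^ (k + (j + 1)) * q ^ ((k + 1 + j) * j) := by ring
      _ ≤ _ := Nat.mul_le_mul_right _ hl'
      _ = 2 * ((∑ x ∈ Finset.univ.filter fun x : V => x ∉ U,
          (Finset.bipartiteBelow (fun (W : Submodule K V) (x : V) => x ∈ W) 𝓦 x).card) *
          q ^ ((k + 1 + j) * j)) := by ring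
      _ ≤ 2 * (Fintype.card V * (2 * Fintype.card V) ^ j) := by
          refine Nat.mul_le_mul_left _ ?_
          exact hr'.trans (Nat.mul_le_mul_right _ hc)
      _ = _ := by ring

open Classical in
/-- An upper bound for the number of subspaces meeting a given one in a given dimension. -/
lemma card_submodule_finrank_inf_mul_le [Fintype (Submodule K V)] {k m : ℕ} (hk : k ≤ m)
    (W : Submodule K V) (hW : finrank K W = m) :
    (Finset.univ.filter fun W' : Submodule K V =>
        finrank K W' = m ∧ finrank K (W ⊓ W' : Submodule K V) = k).card *
      Fintype.card K ^ (m * (m - k)) ≤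
        Fintype.card K ^ (m * k) * (2 * Fintype.card V) ^ (m - k) := by
  obtain ⟨j, rfl⟩ := Nat.exists_eq_add_of_le hk
  rw [Nat.add_sub_cancel_left]
  have hsub : (Finset.univ.filter fun W' : Submodule K V =>
      finrank K W' = k + j ∧ finrank K (W ⊓ W' : Submodule K V) = k) ⊆
      (Finset.univ.filter fun u : Fin k → W => LinearIndependent K u).biUnion fun u =>
        Finset.univ.filter fun W' : Submodule K V =>
          Submodule.span K (Set.range fun i => (u i : V)) ≤ W' ∧ finrank K W' = k + j := by
    intro W' hW'
    simp only [Finset.mem_filter, Finset.mem_univ, true_and] at hW'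
    obtain ⟨f, hf⟩ := exists_linearIndependent_of_le_finrank hW'.2.ge
    simp only [Finset.mem_biUnion, Finset.mem_filter, Finset.mem_univ, true_and]
    refine ⟨fun i => ⟨f i, (f i).2.1⟩, ?_, ?_, hW'.1⟩
    · exact (hf.map' (Submodule.inclusion (inf_le_left : W ⊓ W' ≤ W))
        (Submodule.ker_inclusion _ _ _) :)
    · rw [Submodule.span_le]
      rintro _ ⟨i, rfl⟩
      exact (f i).2.2
  have hu : ∀ u ∈ Finset.univ.filter fun u : Fin k → W => LinearIndependent K u,
      (Finset.univ.filter fun W' : Submodule K V =>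
        Submodule.span K (Set.range fun i => (u i : V)) ≤ W' ∧ finrank K W' = k + j).card *
        Fintype.card K ^ ((k + j) * j) ≤ (2 * Fintype.card V) ^ j := by
    intro u hu
    simp only [Finset.mem_filter, Finset.mem_univ, true_and] at hu
    refine card_submodule_ge_mul_le j k _ ?_
    have h : LinearIndependent K fun i => (u i : V) := hu.map' W.subtype W.ker_subtype
    rw [finrank_span_eq_card h, Fintype.card_fin]
  have hc : (Finset.univ.filter fun u : Fin k → W => LinearIndependent K u).card ≤
      Fintype.card K ^ ((k + j) * k) := by
    refine (Finset.card_le_univ _).trans ?_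
    rw [Fintype.card_fun, Module.card_eq_pow_finrank (K := K) (V := W), hW, Fintype.card_fin,
      pow_mul]
  refine (Nat.mul_le_mul_right _ ((Finset.card_le_card hsub).trans Finset.card_biUnion_le)).trans ?_
  rw [Finset.sum_mul]
  refine (Finset.sum_le_sum hu).trans ?_
  rw [Finset.sum_const, smul_eq_mul]
  exact Nat.mul_le_mul_right _ hc

open Classical in
lemma card_pow_le_card_submodule_mul [Fintype (Submodule K V)] {m : ℕ} (hm : m < finrank K V) :
    Fintype.card V ^ m ≤ 2 ^ m *
      ((Finset.univ.filter fun W : Submodule K V => finrank K W = m).card *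
        Fintype.card K ^ (m * m)) := by
  set q := Fintype.card K with hq
  have hq2 : 2 ≤ q := Fintype.one_lt_card
  have hli := card_linearIndependent (K := K) (V := V) hm.le
  rw [Nat.card_eq_fintype_card, Fintype.card_subtype] at hli
  have hlow : Fintype.card V ^ m ≤
      2 ^ m * (Finset.univ.filter fun s : Fin m → V => LinearIndependent K s).card := by
    rw [hli]
    calc Fintype.card V ^ m = ∏ _i : Fin m, Fintype.card V := by simp
      _ ≤ ∏ i : Fin m, (2 * (q ^ finrank K V - q ^ (i : ℕ))) := by
          refine Finset.prod_le_prod' fun i _ => ?_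
          rw [Module.card_eq_pow_finrank (K := K) (V := V)]
          have h1 : q ^ ((i : ℕ) + 1) ≤ q ^ finrank K V :=
            Nat.pow_le_pow_right (by lia) (by lia)
          have h2 : 2 * q ^ (i : ℕ) ≤ q ^ ((i : ℕ) + 1) := by
            rw [pow_succ, mul_comm]
            exact Nat.mul_le_mul_left _ hq2
          lia
      _ = _ := by rw [Finset.prod_mul_distrib]; simp [hq]
  have hup : (Finset.univ.filter fun s : Fin m → V => LinearIndependent K s).card ≤
      (Finset.univ.filter fun W : Submodule K V => finrank K W = m).card * q ^ (m * m) := by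
    have hsub : (Finset.univ.filter fun s : Fin m → V => LinearIndependent K s) ⊆
        (Finset.univ.filter fun W : Submodule K V => finrank K W = m).biUnion fun W =>
          (Finset.univ : Finset (Fin m → W)).image fun s i => (s i : V) := by
      intro s hs
      simp only [Finset.mem_filter, Finset.mem_univ, true_and] at hs
      simp only [Finset.mem_biUnion, Finset.mem_filter, Finset.mem_univ, true_and,
        Finset.mem_image]
      exact ⟨Submodule.span K (Set.range s), by rw [finrank_span_eq_card hs, Fintype.card_fin],
        fun i => ⟨s i, Submodule.subset_span ⟨i, rfl⟩⟩, rfl⟩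
    refine (Finset.card_le_card hsub).trans (Finset.card_biUnion_le_card_mul _ _ _ ?_)
    intro W hW
    simp only [Finset.mem_filter, Finset.mem_univ, true_and] at hW
    refine Finset.card_image_le.trans ?_
    rw [Finset.card_univ, Fintype.card_fun, Module.card_eq_pow_finrank (K := K) (V := W), hW,
      Fintype.card_fin, pow_mul]
  exact hlow.trans (Nat.mul_le_mul_left _ hup)

end Counting

section Flats

open Module

lemma IsFlat.exists_submodule_of_mem {K V : Type*} [Field K] [AddCommGroup V] [Module K V]
    {m : ℕ} {S : Set V} (hS : IsFlat K m S) {p : V} (hp : p ∈ S) :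
    ∃ W : Submodule K V, finrank K W = m ∧ ∀ x, x ∈ S ↔ x - p ∈ W := by
  obtain ⟨W, hW, v, rfl⟩ := hS
  refine ⟨W, hW, fun x => ?_⟩
  obtain ⟨w, hw, rfl⟩ := hp
  constructor
  · rintro ⟨y, hy, rfl⟩
    simpa using W.sub_mem hy hw
  · intro hx
    exact ⟨x - v, by simpa [sub_add_eq_sub_sub] using W.add_mem hx hw, by simp⟩

lemma isFlat_of_mem_iff {K V : Type*} [Field K] [AddCommGroup V] [Module K V]
    {S : Set V} {W : Submodule K V} {p : V} (h : ∀ x, x ∈ S ↔ x - p ∈ W) :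
    IsFlat K (finrank K W) S := by
  refine ⟨W, rfl, p, ?_⟩
  ext x
  rw [h]
  exact ⟨fun hx => ⟨x - p, hx, by simp⟩, by rintro ⟨y, hy, rfl⟩; simpa using hy⟩

variable (K V : Type*) [Field K] [AddCommGroup V] [Module K V] [Fintype V]

open Classical in
/-- The finite set of all `m`-flats. -/
noncomputable def flats (m : ℕ) : Finset (Finset V) :=
  Finset.univ.filter fun S => IsFlat K m (S : Set V)

variable {K V}

lemma mem_flats {m : ℕ} {S : Finset V} : S ∈ flats K V m ↔ IsFlat K m (S : Set V) := by
  simp [flats]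

lemma exists_mem_flats_subset_iff (m : ℕ) (A : Finset V) :
    (∃ S ∈ flats K V m, S ⊆ A) ↔ ∃ S : Set V, IsFlat K m S ∧ S ⊆ (A : Set V) := by
  constructor
  · rintro ⟨S, hS, hSA⟩
    exact ⟨S, mem_flats.1 hS, by exact_mod_cast hSA⟩
  · rintro ⟨S, hS, hSA⟩
    obtain ⟨T, rfl⟩ := (Set.toFinite S).exists_finset_coe
    exact ⟨T, mem_flats.2 hS, by exact_mod_cast hSA⟩

lemma natCard_isFlat (m : ℕ) :
    Nat.card {S : Set V // IsFlat K m S} = (flats K V m).card := by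
  rw [← Fintype.card_coe, ← Nat.card_eq_fintype_card]
  refine (Nat.card_congr (Fintype.finsetEquivSet.subtypeEquiv fun S => ?_)).symm
  rw [mem_flats, Fintype.finsetEquivSet_apply]

variable [Fintype K]

lemma card_of_mem_iff {S : Finset V} {W : Submodule K V} {p : V}
    (h : ∀ x, x ∈ S ↔ x - p ∈ W) : S.card = Fintype.card K ^ finrank K W := by
  classical
  rw [← Module.card_eq_pow_finrank (K := K) (V := W), ← Fintype.card_coe]
  exact Fintype.card_congr ((Equiv.subRight p).subtypeEquiv h)

lemma card_of_mem_flats {m : ℕ} {S : Finset V} (hS : S ∈ flats K V m) :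
    S.card = Fintype.card K ^ m := by
  have hS' := mem_flats.1 hS
  have hne : ∃ p, p ∈ S := by
    obtain ⟨W, -, v, h⟩ := hS'
    exact ⟨v, by rw [← Finset.mem_coe, h]; exact ⟨0, W.zero_mem, by simp⟩⟩
  obtain ⟨p, hp⟩ := hne
  obtain ⟨W, hW, h⟩ := hS'.exists_submodule_of_mem (p := p) (by exact_mod_cast hp)
  rw [card_of_mem_iff (fun x => by simpa using h x), hW]

lemma exists_card_inter_eq_pow [DecidableEq V] {m : ℕ} {S T : Finset V} (hS : S ∈ flats K V m)
    (hT : T ∈ flats K V m) (h : (S ∩ T).Nonempty) :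
    ∃ k ≤ m, (S ∩ T).card = Fintype.card K ^ k := by
  obtain ⟨p, hp⟩ := h
  rw [Finset.mem_inter] at hp
  obtain ⟨W, hW, hWS⟩ := (mem_flats.1 hS).exists_submodule_of_mem (p := p) (by exact_mod_cast hp.1)
  obtain ⟨W', -, hWT⟩ := (mem_flats.1 hT).exists_submodule_of_mem (p := p) (by exact_mod_cast hp.2)
  refine ⟨finrank K (W ⊓ W' : Submodule K V), hW ▸ Submodule.finrank_mono inf_le_left,
    card_of_mem_iff (p := p) fun x => ?_⟩
  rw [Finset.mem_inter, Submodule.mem_inf, ← hWS, ← hWT, Finset.mem_coe, Finset.mem_coe]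

/-- An upper bound for the number of flats meeting a given one in a given dimension. -/
lemma card_flats_inter_mul_le [DecidableEq V] {k m : ℕ} (hk : k ≤ m) {S : Finset V}
    (hS : S ∈ flats K V m) :
    ((flats K V m).filter fun T => (S ∩ T).card = Fintype.card K ^ k).card *
      Fintype.card K ^ (m * (m - k)) ≤
        Fintype.card K ^ (m * (k + 1)) * (2 * Fintype.card V) ^ (m - k) := by
  classical
  have : Fintype (Submodule K V) := Fintype.ofFinite _
  have hq2 : 2 ≤ Fintype.card K := Fintype.one_lt_card
  have hS' := mem_flats.1 hS
  have hdir : ∃ W : Submodule K V, finrank K W = m ∧ ∀ p ∈ S, ∀ x, x ∈ S ↔ x - p ∈ W := by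
    obtain ⟨W, hW, v, h⟩ := hS'
    refine ⟨W, hW, fun p hp x => ?_⟩
    have hmem : ∀ y, y ∈ S ↔ y - v ∈ W := by
      intro y
      rw [← Finset.mem_coe, h]
      exact ⟨by rintro ⟨z, hz, rfl⟩; simpa using hz, fun hy => ⟨y - v, hy, by simp⟩⟩
    rw [hmem, ← W.sub_mem_iff_left ((hmem p).1 hp), sub_sub_sub_cancel_right]
  obtain ⟨W, hW, hWS⟩ := hdir
  set 𝓜 := Finset.univ.filter fun W' : Submodule K V =>
        finrank K W' = m ∧ finrank K (W ⊓ W' : Submodule K V) = k with h𝓜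
  have hsub : ((flats K V m).filter fun T => (S ∩ T).card = Fintype.card K ^ k) ⊆
      (S ×ˢ 𝓜).image fun a => Finset.univ.filter fun x => x - a.1 ∈ a.2 := by
    intro T hT
    rw [Finset.mem_filter] at hT
    have hne : (S ∩ T).Nonempty := by
      rw [← Finset.card_pos, hT.2]
      positivity
    obtain ⟨p, hp⟩ := hne
    rw [Finset.mem_inter] at hp
    obtain ⟨W', hW', hWT⟩ :=
      (mem_flats.1 hT.1).exists_submodule_of_mem (p := p) (by exact_mod_cast hp.2)
    have hc : (S ∩ T).card = Fintype.card K ^ finrank K (W ⊓ W' : Submodule K V) :=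
      card_of_mem_iff (p := p) fun x => by
        rw [Finset.mem_inter, Submodule.mem_inf, ← hWS p hp.1, ← hWT, Finset.mem_coe]
    rw [hT.2] at hc
    refine Finset.mem_image.2 ⟨(p, W'), ?_, ?_⟩
    · simp only [Finset.mem_product, h𝓜, Finset.mem_filter, Finset.mem_univ, true_and]
      exact ⟨hp.1, hW', (Nat.pow_right_injective hq2 hc).symm⟩
    · ext x
      simp [← hWT]
  have hc := (Finset.card_le_card hsub).trans Finset.card_image_le
  rw [Finset.card_product, card_of_mem_flats hS] at hc
  refine (Nat.mul_le_mul_right _ hc).trans ?_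
  rw [mul_assoc]
  refine (Nat.mul_le_mul_left _ (card_submodule_finrank_inf_mul_le hk W hW)).trans (le_of_eq ?_)
  ring

lemma card_pow_le_card_flats_mul {m : ℕ} (hm : m < finrank K V) :
    Fintype.card V ^ (m + 1) ≤
      2 ^ m * ((flats K V m).card * Fintype.card K ^ (m * (m + 1))) := by
  classical
  have : Fintype (Submodule K V) := Fintype.ofFinite _
  have h := card_pow_le_card_submodule_mul (K := K) (V := V) hm
  have hpairs : (Finset.univ.filter fun W : Submodule K V => finrank K W = m).card *
      Fintype.card V ≤ (flats K V m).card * Fintype.card K ^ m := by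
    rw [← Finset.card_univ (α := V), ← Finset.card_product]
    have hsig : ((flats K V m).sigma fun S => S).card =
        (flats K V m).card * Fintype.card K ^ m := by
      rw [Finset.card_sigma, Finset.sum_congr rfl fun S hS => card_of_mem_flats hS,
        Finset.sum_const, smul_eq_mul]
    rw [← hsig]
    refine Finset.card_le_card_of_injOn
      (fun a => ⟨Finset.univ.filter fun x => x - a.2 ∈ a.1, a.2⟩) ?_ ?_
    · rintro ⟨W, v⟩ hW
      simp only [Finset.coe_product, Set.mem_prod, Finset.mem_coe, Finset.mem_filter,
        Finset.mem_univ, true_and, and_true] at hW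
      simp only [Finset.coe_sigma, Set.mem_sigma_iff, Finset.mem_coe, mem_flats,
        Finset.mem_filter, Finset.mem_univ, sub_self, W.zero_mem, and_true]
      rw [← hW]
      exact isFlat_of_mem_iff (p := v) fun x => by simp
    · rintro ⟨W, v⟩ - ⟨W', v'⟩ - heq
      simp only [Sigma.mk.injEq, heq_eq_eq] at heq
      obtain ⟨h1, rfl⟩ := heq
      congr 1
      ext x
      have := Finset.ext_iff.1 h1 (x + v)
      simpa using this
  calc Fintype.card V ^ (m + 1) = Fintype.card V ^ m * Fintype.card V := pow_succ _ _
    _ ≤ 2 ^ m * ((Finset.univ.filter fun W : Submodule K V => finrank K W = m).card *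
        Fintype.card K ^ (m * m)) * Fintype.card V := Nat.mul_le_mul_right _ h
    _ = 2 ^ m * Fintype.card K ^ (m * m) *
        ((Finset.univ.filter fun W : Submodule K V => finrank K W = m).card *
          Fintype.card V) := by ring
    _ ≤ 2 ^ m * Fintype.card K ^ (m * m) * ((flats K V m).card * Fintype.card K ^ m) :=
        Nat.mul_le_mul_left _ hpairs
    _ = _ := by ring

omit [Fintype K] in
lemma card_flats_le_pow (m : ℕ) : (flats K V m).card ≤ Fintype.card V ^ (m + 1) := by
  classical
  have hsub : flats K V m ⊆ (Finset.univ : Finset (V × (Fin m → V))).image fun a =>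
      Finset.univ.filter fun x => x - a.1 ∈ Submodule.span K (Set.range a.2) := by
    intro S hS
    obtain ⟨W, hW, v, h⟩ := mem_flats.1 hS
    obtain ⟨f, hf⟩ := exists_linearIndependent_of_le_finrank hW.ge
    have hspan : Submodule.span K (Set.range fun i => (f i : V)) = W := by
      refine Submodule.eq_of_le_of_finrank_eq ?_ ?_
      · rw [Submodule.span_le]
        rintro _ ⟨i, rfl⟩
        exact (f i).2
      · have hf' : LinearIndependent K fun i => (f i : V) := hf.map' W.subtype W.ker_subtype
        rw [finrank_span_eq_card hf', Fintype.card_fin, hW]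
    refine Finset.mem_image.2 ⟨(v, fun i => f i), Finset.mem_univ _, ?_⟩
    ext x
    rw [← Finset.mem_coe (s := S), h]
    simp only [Finset.mem_filter, Finset.mem_univ, true_and, hspan]
    exact ⟨fun hx => ⟨x - v, hx, by simp⟩, by rintro ⟨y, hy, rfl⟩; simpa using hy⟩
  refine (Finset.card_le_card hsub).trans (Finset.card_image_le.trans (le_of_eq ?_))
  rw [Finset.card_univ, Fintype.card_prod, Fintype.card_fun, Fintype.card_fin]
  ring

/-- The proportion of flats meeting a given one in a given dimension. -/
lemma card_flats_inter_mul_pow_le [DecidableEq V] {d k m : ℕ} (hk : k ≤ m) (hd : 0 < d)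
    (hV : finrank K V = 2 * m + d) {S : Finset V} (hS : S ∈ flats K V m) :
    ((flats K V m).filter fun T => (S ∩ T).card = Fintype.card K ^ k).card *
      Fintype.card K ^ (d * (k + 1)) ≤ 4 ^ m * (flats K V m).card := by
  have h1 := card_flats_inter_mul_le hk hS
  have h2 := card_pow_le_card_flats_mul (K := K) (V := V) (m := m) (by lia)
  have hq : 0 < Fintype.card K := Fintype.card_pos
  rw [Module.card_eq_pow_finrank (K := K) (V := V), hV] at h1 h2
  set q := Fintype.card K
  set c := ((flats K V m).filter fun T => (S ∩ T).card = q ^ k).card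
  set N := (flats K V m).card
  obtain ⟨j, rfl⟩ := Nat.exists_eq_add_of_le hk
  rw [Nat.add_sub_cancel_left] at h1
  have h3 := Nat.mul_le_mul h1 h2
  have hpos : 0 < q ^ ((k + j) * j + 2 * (k + j) * (k + 1) + (2 * (k + j) + d) * j) := by
    positivity
  refine Nat.le_of_mul_le_mul_left ?_ hpos
  calc _ = c * q ^ ((k + j) * j) * (q ^ (2 * (k + j) + d)) ^ (k + j + 1) := by ring
    _ ≤ _ := h3
    _ = 2 ^ j * 2 ^ (k + j) * (q ^ ((k + j) * j + 2 * (k + j) * (k + 1) + (2 * (k + j) + d) * j)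
        * N) := by ring
    _ ≤ 4 ^ (k + j) * (q ^ ((k + j) * j + 2 * (k + j) * (k + 1) + (2 * (k + j) + d) * j)
        * N) := by
      refine Nat.mul_le_mul_right _ ?_
      rw [show 4 = 2 * 2 from rfl, mul_pow]
      exact Nat.mul_le_mul_right _ (Nat.pow_le_pow_right (by lia) (by lia))
    _ = _ := by ring

end Flats

section Threshold

open Module

/-- The two regimes of the second moment error: large fields, and large `t`. -/
lemma inv_pow_mul_le_sqrt_inv_add {q d k m Q : ℕ} {x t : ℝ} (hq : 2 ≤ q) (hd : 0 < d) (hk : k < m)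
    (hQ : 2 * (m + 1) * (2 * m + 1) ≤ Q) (ht : 1 ≤ t) (hx : 0 ≤ x)
    (h : x ^ q ^ (m - k) * t ≤ (q : ℝ) ^ ((2 * m + d) * (m + 1))) :
    ((q : ℝ) ^ (d * (k + 1)))⁻¹ * x ≤
      √(Q : ℝ)⁻¹ + (Q : ℝ) ^ (2 * m * (m + 1)) * t⁻¹ ^ ((Q ^ m : ℕ) : ℝ)⁻¹ := by
  have hq0 : (0 : ℝ) < q := by positivity
  have hq1 : (1 : ℝ) ≤ q := by exact_mod_cast (by lia : 1 ≤ q)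
  have hQ1 : 1 ≤ Q := le_trans (by nlinarith) hQ
  have ht0 : 0 < t := by linarith
  set r := q ^ (m - k) with hr
  have hqr : q ≤ r := Nat.le_self_pow (by lia) q
  have hr0 : r ≠ 0 := by positivity
  rcases le_or_gt Q q with hqQ | hqQ
  · refine le_trans ?_ (le_add_of_nonneg_right (by positivity))
    refine Real.le_sqrt_of_sq_le ?_
    have hexp : 2 * ((2 * m + d) * (m + 1)) ≤ d * r := by
      have h1 : 2 * m + d ≤ d * (2 * m + 1) := by nlinarith
      calc 2 * ((2 * m + d) * (m + 1)) ≤ 2 * (d * (2 * m + 1) * (m + 1)) := by gcongr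
        _ = d * (2 * (m + 1) * (2 * m + 1)) := by ring
        _ ≤ d * r := Nat.mul_le_mul_left _ (hQ.trans (hqQ.trans hqr))
    have hx2 : x ^ 2 ≤ (q : ℝ) ^ d := by
      refine (pow_le_pow_iff_left₀ (by positivity) (by positivity) hr0).1 ?_
      have hxr : x ^ r ≤ (q : ℝ) ^ ((2 * m + d) * (m + 1)) :=
        (le_mul_of_one_le_right (by positivity) ht).trans h
      calc (x ^ 2) ^ r = (x ^ r) ^ 2 := by ring
        _ ≤ ((q : ℝ) ^ ((2 * m + d) * (m + 1))) ^ 2 := by gcongr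
        _ = (q : ℝ) ^ (2 * ((2 * m + d) * (m + 1))) := by ring
        _ ≤ (q : ℝ) ^ (d * r) := pow_le_pow_right₀ hq1 hexp
        _ = _ := pow_mul _ _ _
    calc (((q : ℝ) ^ (d * (k + 1)))⁻¹ * x) ^ 2
        = ((q : ℝ) ^ (2 * d * (k + 1)))⁻¹ * x ^ 2 := by rw [mul_pow, inv_pow]; ring
      _ ≤ ((q : ℝ) ^ (d + 1))⁻¹ * (q : ℝ) ^ d := by
          have hle : d + 1 ≤ 2 * d * (k + 1) := by nlinarith
          have := pow_le_pow_right₀ hq1 hle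
          gcongr
      _ = (q : ℝ)⁻¹ := by rw [pow_succ]; field_simp
      _ ≤ (Q : ℝ)⁻¹ := by
          have : (0 : ℝ) < Q := by exact_mod_cast hQ1
          gcongr
  · refine le_trans ?_ (le_add_of_nonneg_left (by positivity))
    have hmk : m + 1 ≤ (k + 1) * r := by
      obtain ⟨j, rfl⟩ := Nat.exists_eq_add_of_lt hk
      have h1 : j + 1 < 2 ^ (j + 1) := Nat.lt_two_pow_self
      have h2 : 2 ^ (j + 1) ≤ r := by
        rw [hr, show k + j + 1 - k = j + 1 by lia]
        exact Nat.pow_le_pow_left hq _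
      nlinarith
    set z := x / (q : ℝ) ^ ((2 * m + d) * (k + 1)) with hz
    have hz0 : 0 ≤ z := by positivity
    have hzr : z ^ r ≤ t⁻¹ := by
      rw [hz, div_pow, div_le_iff₀ (by positivity), inv_mul_eq_div, le_div_iff₀ ht0, ← pow_mul]
      refine h.trans (pow_le_pow_right₀ hq1 ?_)
      rw [mul_assoc]
      exact Nat.mul_le_mul_left _ hmk
    have hz1 : z ≤ 1 := by
      by_contra! hcon
      have h1 := one_lt_pow₀ hcon hr0
      have h2 := inv_le_one_of_one_le₀ ht
      linarith
    have hrQ : r ≤ Q ^ m :=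
      (Nat.pow_le_pow_right (by lia) (Nat.sub_le _ _)).trans (Nat.pow_le_pow_left hqQ.le _)
    have hzt : z ≤ t⁻¹ ^ ((Q ^ m : ℕ) : ℝ)⁻¹ := by
      rw [← Real.pow_rpow_inv_natCast hz0 (n := Q ^ m) (by positivity)]
      exact Real.rpow_le_rpow (by positivity)
        ((pow_le_pow_of_le_one hz0 hz1 hrQ).trans hzr) (by positivity)
    have hxz : x = z * (q : ℝ) ^ ((2 * m + d) * (k + 1)) := by
      rw [hz]
      field_simp
    calc ((q : ℝ) ^ (d * (k + 1)))⁻¹ * x = (q : ℝ) ^ (2 * m * (k + 1)) * z := by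
          rw [hxz, show (2 * m + d) * (k + 1) = 2 * m * (k + 1) + d * (k + 1) by ring, pow_add]
          field_simp
      _ ≤ (Q : ℝ) ^ (2 * m * (m + 1)) * t⁻¹ ^ ((Q ^ m : ℕ) : ℝ)⁻¹ := by
          gcongr
          calc (q : ℝ) ^ (2 * m * (k + 1)) ≤ (Q : ℝ) ^ (2 * m * (k + 1)) := by gcongr
            _ ≤ _ := pow_le_pow_right₀ (by exact_mod_cast hQ1) (by gcongr)

variable {K V : Type*} [Field K] [Fintype K] [AddCommGroup V] [Module K V] [Fintype V]

lemma card_flats_pos {m : ℕ} (hm : m < finrank K V) : 0 < (flats K V m).card := by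
  by_contra! h
  have := card_pow_le_card_flats_mul hm
  rw [Nat.le_zero.1 h, zero_mul, mul_zero] at this
  have hV : 0 < Fintype.card V ^ (m + 1) := pow_pos Fintype.card_pos _
  lia

lemma prRandomSubset_flat_le {m : ℕ} (hm : m < finrank K V) {θ t : ℝ} (h0 : 0 ≤ θ) (h1 : θ ≤ 1)
    (ht : 0 < t)
    (h : θ < ((flats K V m).card * t) ^ (-(1 : ℝ) / ((Fintype.card K ^ m : ℕ) : ℝ))) :
    prRandomSubset Finset.univ θ (fun A => ∃ S ∈ flats K V m, S ⊆ A) ≤ t⁻¹ := by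
  refine (prRandomSubset_exists_subset_le h0 h1 _ fun S hS => card_of_mem_flats hS).trans ?_
  have hN : (0 : ℝ) < (flats K V m).card := by exact_mod_cast card_flats_pos hm
  have hℓ : Fintype.card K ^ m ≠ 0 := pow_ne_zero _ Fintype.card_ne_zero
  have hp := pow_le_pow_left₀ h0 h.le (Fintype.card K ^ m)
  rw [neg_div, one_div, Real.rpow_neg (by positivity), inv_pow,
    Real.rpow_inv_natCast_pow (by positivity) hℓ, mul_inv] at hp
  calc (flats K V m).card * θ ^ Fintype.card K ^ m
      ≤ (flats K V m).card * (((flats K V m).card : ℝ)⁻¹ * t⁻¹) := by gcongr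
    _ = t⁻¹ := by field_simp

lemma prRandomSubset_not_flat_le {d m Q : ℕ} (hd : 0 < d) (hV : finrank K V = 2 * m + d)
    (hQ : 2 * (m + 1) * (2 * m + 1) ≤ Q) {θ t : ℝ} (h1 : θ ≤ 1) (ht : 1 ≤ t)
    (h : ((flats K V m).card / t) ^ (-(1 : ℝ) / ((Fintype.card K ^ m : ℕ) : ℝ)) < θ) :
    prRandomSubset Finset.univ θ (fun A => ¬ ∃ S ∈ flats K V m, S ⊆ A) ≤
      t⁻¹ + m * (4 ^ m *
        (√(Q : ℝ)⁻¹ + (Q : ℝ) ^ (2 * m * (m + 1)) * t⁻¹ ^ ((Q ^ m : ℕ) : ℝ)⁻¹)) := by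
  classical
  have hN : (0 : ℝ) < (flats K V m).card := by
    exact_mod_cast card_flats_pos (K := K) (V := V) (by lia)
  have ht0 : 0 < t := by linarith
  have h0 : 0 < θ := lt_of_le_of_lt (by positivity) h
  have hsec := prRandomSubset_not_exists_subset_le h0 h1 (flats K V m)
    fun S hS => card_of_mem_flats hS
  have hNle := card_flats_le_pow (K := K) (V := V) m
  rw [Module.card_eq_pow_finrank (K := K) (V := V), hV, ← pow_mul] at hNle
  set q := Fintype.card K with hq
  have hq2 : 2 ≤ q := Fintype.one_lt_card
  have hq0 : (0 : ℝ) < q := by positivity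
  set N := (flats K V m).card
  set B := √(Q : ℝ)⁻¹ + (Q : ℝ) ^ (2 * m * (m + 1)) * t⁻¹ ^ ((Q ^ m : ℕ) : ℝ)⁻¹ with hB
  have hθℓ : (θ ^ q ^ m)⁻¹ ≤ N / t := by
    have hp := pow_le_pow_left₀ (by positivity) h.le (q ^ m)
    rw [neg_div, one_div, Real.rpow_neg (by positivity), inv_pow,
      Real.rpow_inv_natCast_pow (by positivity) (by positivity)] at hp
    exact inv_le_of_inv_le₀ (by positivity) hp
  have hterm : ∀ S ∈ flats K V m, ∑ T ∈ flats K V m with (S ∩ T).Nonempty,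
      (θ ^ (S ∩ T).card)⁻¹ ≤ N / t + m * (4 ^ m * N * B) := by
    intro S hS
    have hcover : ∑ T ∈ flats K V m with (S ∩ T).Nonempty, (θ ^ (S ∩ T).card)⁻¹ ≤
        ∑ k ∈ Finset.range (m + 1),
          (((flats K V m).filter fun T => (S ∩ T).card = q ^ k).card : ℝ) *
            (θ ^ q ^ k)⁻¹ := by
      have hinner : ∀ k ∈ Finset.range (m + 1),
          (((flats K V m).filter fun T => (S ∩ T).card = q ^ k).card : ℝ) * (θ ^ q ^ k)⁻¹ =
          ∑ T ∈ flats K V m, if (S ∩ T).card = q ^ k then (θ ^ (S ∩ T).card)⁻¹ else 0 := by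
        intro k _
        rw [← Finset.sum_filter, Finset.sum_congr rfl fun T hT => by
          rw [(Finset.mem_filter.1 hT).2], Finset.sum_const, nsmul_eq_mul]
      rw [Finset.sum_congr rfl hinner, Finset.sum_comm, Finset.sum_filter]
      refine Finset.sum_le_sum fun T hT => ?_
      split_ifs with hne
      · obtain ⟨k, hk, hkc⟩ := exists_card_inter_eq_pow hS hT hne
        refine le_trans ?_ (Finset.single_le_sum (fun j _ => by split_ifs <;> positivity)
          (Finset.mem_range.2 (Nat.lt_succ_of_le hk)))
        rw [if_pos hkc]
      · exact Finset.sum_nonneg fun j _ => by split_ifs <;> positivity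
    refine hcover.trans ?_
    rw [Finset.sum_range_succ, add_comm]
    refine add_le_add ?_ ?_
    · have hone : ((flats K V m).filter fun T => (S ∩ T).card = q ^ m).card ≤ 1 := by
        have hsub : ((flats K V m).filter fun T => (S ∩ T).card = q ^ m) ⊆ {S} := by
          intro T hT
          rw [Finset.mem_filter] at hT
          have e1 := Finset.eq_of_subset_of_card_le (Finset.inter_subset_left (s₁ := S) (s₂ := T))
            (by rw [hT.2, card_of_mem_flats hS])
          have e2 := Finset.eq_of_subset_of_card_le (Finset.inter_subset_right (s₁ := S) (s₂ := T))
            (by rw [hT.2, card_of_mem_flats hT.1])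
          exact Finset.mem_singleton.2 (e2.symm.trans e1)
        exact (Finset.card_le_card hsub).trans (Finset.card_singleton S).le
      have hone' : (((flats K V m).filter fun T => (S ∩ T).card = q ^ m).card : ℝ) ≤ 1 := by
        exact_mod_cast hone
      exact (mul_le_of_le_one_left (by positivity) hone').trans hθℓ
    · have hk : ∀ k ∈ Finset.range m,
          (((flats K V m).filter fun T => (S ∩ T).card = q ^ k).card : ℝ) * (θ ^ q ^ k)⁻¹ ≤
            4 ^ m * N * B := by
        intro k hk
        rw [Finset.mem_range] at hk
        have hc := card_flats_inter_mul_pow_le hk.le hd hV hS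
        have hc' : (((flats K V m).filter fun T => (S ∩ T).card = q ^ k).card : ℝ) *
            (q : ℝ) ^ (d * (k + 1)) ≤ 4 ^ m * N := by exact_mod_cast hc
        rw [← le_div_iff₀ (by positivity), div_eq_mul_inv] at hc'
        have hxt : ((θ ^ q ^ k)⁻¹) ^ q ^ (m - k) * t ≤ (q : ℝ) ^ ((2 * m + d) * (m + 1)) := by
          rw [inv_pow, ← pow_mul, ← pow_add, Nat.add_sub_cancel' hk.le]
          exact ((le_div_iff₀ ht0).1 hθℓ).trans (by exact_mod_cast hNle)
        have hb := inv_pow_mul_le_sqrt_inv_add hq2 hd hk hQ ht (by positivity) hxt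
        calc _ ≤ 4 ^ m * N * ((q : ℝ) ^ (d * (k + 1)))⁻¹ * (θ ^ q ^ k)⁻¹ := by gcongr
          _ = 4 ^ m * N * (((q : ℝ) ^ (d * (k + 1)))⁻¹ * (θ ^ q ^ k)⁻¹) := by ring
          _ ≤ 4 ^ m * N * B := by gcongr
      refine (Finset.sum_le_sum hk).trans (le_of_eq ?_)
      rw [Finset.sum_const, Finset.card_range, nsmul_eq_mul]
  have hfin := hsec.trans (Finset.sum_le_sum hterm)
  rw [Finset.sum_const, nsmul_eq_mul, show (flats K V m).card = N from rfl] at hfin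
  rw [← mul_le_mul_iff_left₀ (by positivity : (0 : ℝ) < (N : ℝ) ^ 2)]
  refine hfin.trans (le_of_eq ?_)
  field_simp

lemma tendsto_zero_of_two_regimes {m : ℕ} {a Q₀ : ℕ} {c : ℝ} {p t : ℕ → ℝ}
    (ht : Tendsto t atTop atTop) (hp0 : ∀ i, 0 ≤ p i)
    (hp : ∀ i, 1 ≤ t i → ∀ Q, Q₀ ≤ Q → p i ≤ (t i)⁻¹ +
      c * (√(Q : ℝ)⁻¹ + (Q : ℝ) ^ a * (t i)⁻¹ ^ ((Q ^ m : ℕ) : ℝ)⁻¹)) :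
    Tendsto p atTop (nhds 0) := by
  rw [Metric.tendsto_atTop']
  intro ε hε
  have hQlim : Tendsto (fun Q : ℕ => c * √(Q : ℝ)⁻¹) atTop (nhds 0) := by
    have h : Tendsto (fun Q : ℕ => √(Q : ℝ)⁻¹) atTop (nhds (√0)) :=
      (Real.continuous_sqrt.tendsto 0).comp tendsto_inv_atTop_nhds_zero_nat
    simpa using h.const_mul c
  obtain ⟨Q, hQε, hQ⟩ := ((hQlim.eventually_lt_const (half_pos hε)).and
    (eventually_ge_atTop (max Q₀ 1))).exists
  have hQm : (0 : ℝ) < ((Q ^ m : ℕ) : ℝ)⁻¹ := by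
    have : 0 < Q := by lia
    positivity
  have htinv : Tendsto (fun i => (t i)⁻¹) atTop (nhds 0) := tendsto_inv_atTop_zero.comp ht
  have hlim : Tendsto (fun i => (t i)⁻¹ + c * ((Q : ℝ) ^ a * (t i)⁻¹ ^ ((Q ^ m : ℕ) : ℝ)⁻¹))
      atTop (nhds 0) := by
    have h := htinv.rpow_const (p := ((Q ^ m : ℕ) : ℝ)⁻¹) (Or.inr hQm.le)
    rw [Real.zero_rpow hQm.ne'] at h
    simpa using htinv.add ((h.const_mul ((Q : ℝ) ^ a)).const_mul c)
  obtain ⟨M, hM⟩ := eventually_atTop.1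
    ((hlim.eventually_lt_const (half_pos hε)).and (ht.eventually_ge_atTop 1))
  refine ⟨M, fun i hi => ?_⟩
  obtain ⟨h1, h2⟩ := hM i hi.le
  rw [Real.dist_0_eq_abs, abs_of_nonneg (hp0 i)]
  have := hp i h2 Q (by lia)
  linarith

end Threshold

theorem stmt11 (n q : ℕ → ℕ) (F : ℕ → Type) [∀ i, Field (F i)] [∀ i, Fintype (F i)]
    (m : ℕ) (hmn : ∀ i, 2 * m < n i)
    (hq : ∀ i, Fintype.card (F i) = q i) (hqpp : ∀ i, IsPrimePow (q i))
    (hnq : Tendsto (fun i => n i + q i) atTop atTop)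
    (t : ℕ → ℝ) (ht : Tendsto t atTop atTop)
    (θ : ℕ → ℝ) (hθ : ∀ i, 0 ≤ θ i ∧ θ i ≤ 1) :
    ((∀ i, θ i < ((Nat.card {S : Set (Fin (n i) → F i) // IsFlat (F i) m S} : ℝ) * t i)
        ^ (-(1 : ℝ) / ((q i ^ m : ℕ) : ℝ))) →
      Tendsto (fun i => prRandomSubset (Finset.univ : Finset (Fin (n i) → F i)) (θ i)
        (fun A => ∃ S : Set (Fin (n i) → F i), IsFlat (F i) m S ∧
          S ⊆ (A : Set (Fin (n i) → F i)))) atTop (nhds 0)) ∧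
    ((∀ i, ((Nat.card {S : Set (Fin (n i) → F i) // IsFlat (F i) m S} : ℝ) / t i)
        ^ (-(1 : ℝ) / ((q i ^ m : ℕ) : ℝ)) < θ i) →
      Tendsto (fun i => prRandomSubset (Finset.univ : Finset (Fin (n i) → F i)) (θ i)
        (fun A => ∃ S : Set (Fin (n i) → F i), IsFlat (F i) m S ∧
          S ⊆ (A : Set (Fin (n i) → F i)))) atTop (nhds 1)) := by
  simp only [← exists_mem_flats_subset_iff, natCard_isFlat, ← hq]
  have hfr : ∀ i, Module.finrank (F i) (Fin (n i) → F i) = n i := fun i => by simp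
  constructor
  · intro h
    refine squeeze_zero' (Eventually.of_forall fun i =>
      prRandomSubset_nonneg _ (hθ i).1 (hθ i).2 _) ?_ (tendsto_inv_atTop_zero.comp ht)
    filter_upwards [ht.eventually_gt_atTop 0] with i hi
    exact prRandomSubset_flat_le (by have := hmn i; rw [hfr]; lia) (hθ i).1 (hθ i).2 hi (h i)
  · intro h
    have hnot : Tendsto (fun i => prRandomSubset (Finset.univ : Finset (Fin (n i) → F i)) (θ i)
        (fun A => ¬ ∃ S ∈ flats (F i) (Fin (n i) → F i) m, S ⊆ A)) atTop (nhds 0) := by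
      refine tendsto_zero_of_two_regimes (m := m) (a := 2 * m * (m + 1))
        (Q₀ := 2 * (m + 1) * (2 * m + 1)) (c := m * 4 ^ m) ht
        (fun i => prRandomSubset_nonneg _ (hθ i).1 (hθ i).2 _) fun i hi Q hQ => ?_
      rw [mul_assoc]
      have := hmn i
      exact prRandomSubset_not_flat_le (d := n i - 2 * m) (by lia) (by rw [hfr]; lia) hQ
        (hθ i).2 hi (h i)
    have := hnot.const_sub 1
    rw [sub_zero] at this
    refine this.congr fun i => ?_
    rw [sub_eq_iff_eq_add]
    exact (prRandomSubset_add_not _ _).symm
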